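/- arXiv:1210.3742 — 3 statements merged into one kernel-verified Lean document; each statement's English description precedes it below -/
import Mathlib

section
/- Let 0 ≤ m < n and embed the unit m-sphere S^m = {x ∈ ℝ^n : x_{m+2} = ⋯ = x_n = 0, ‖x‖ = 1} in ℝ^n, and set s = n − m. Then for every ε with 0 < ε < 1, the Lebesgue volume of the ε-neighborhood {x ∈ ℝ^n : infDist(x, S^m) ≤ ε} equals 2 · ω_{m+1} · ε^s · ∑_{0 ≤ i ≤ m, i even} (ω_{s+i}/ω_{i+1}) · ((m+1) choose (i+1)) · ε^i, where ω_k = π^{k/2}/Γ(k/2+1) is the volume of the k-dimensional unit ball. -/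
open MeasureTheory Metric Finset

/-- The volume of the `k`-dimensional unit ball, `ω_k = π^{k/2} / Γ(k/2 + 1)`. -/
noncomputable def unitBallVol (k : ℕ) : ℝ :=
  Real.pi ^ ((k : ℝ) / 2) / Real.Gamma ((k : ℝ) / 2 + 1)

/-- `unitBallVol` written with the half-integer power of `π` as a power of `√π`. -/
lemma unitBallVol_eq_sqrt_pow (k : ℕ) :
    unitBallVol k = √Real.pi ^ k / Real.Gamma ((k : ℝ) / 2 + 1) := by
  rw [unitBallVol, Real.sqrt_eq_rpow, ← Real.rpow_natCast, ← Real.rpow_mul Real.pi_pos.le]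
  congr 2
  ring

lemma unitBallVol_pos (k : ℕ) : 0 < unitBallVol k :=
  div_pos (Real.rpow_pos_of_pos Real.pi_pos _) (Real.Gamma_pos_of_pos (by positivity))

section

variable {E : Type*} [NormedAddCommGroup E] [InnerProductSpace ℝ E] [FiniteDimensional ℝ E]
  [MeasurableSpace E] [BorelSpace E] [Nontrivial E]

lemma volume_closedBall_eq_unitBallVol (x : E) {r : ℝ} (hr : 0 ≤ r) :
    volume (closedBall x r) =
      ENNReal.ofReal (unitBallVol (Module.finrank ℝ E) * r ^ Module.finrank ℝ E) := by
  rw [InnerProductSpace.volume_closedBall, ← unitBallVol_eq_sqrt_pow, ← ENNReal.ofReal_pow hr,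
    ← ENNReal.ofReal_mul (by positivity), mul_comm]

lemma volume_ball_eq_unitBallVol (x : E) {r : ℝ} (hr : 0 ≤ r) :
    volume (ball x r) =
      ENNReal.ofReal (unitBallVol (Module.finrank ℝ E) * r ^ Module.finrank ℝ E) := by
  rw [← Measure.addHaar_closedBall_eq_addHaar_ball, volume_closedBall_eq_unitBallVol x hr]

/-- The volume of a closed spherical shell around the unit sphere. -/
lemma volume_shell {r : ℝ} (hr0 : 0 ≤ r) (hr1 : r ≤ 1) :
    volume (closedBall (0 : E) (1 + r) \ ball 0 (1 - r)) =
      ENNReal.ofReal (unitBallVol (Module.finrank ℝ E) *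
        ((1 + r) ^ Module.finrank ℝ E - (1 - r) ^ Module.finrank ℝ E)) := by
  have hsub : ball (0 : E) (1 - r) ⊆ closedBall 0 (1 + r) :=
    ball_subset_closedBall.trans (closedBall_subset_closedBall (by linarith))
  have h1 : 0 ≤ 1 - r := by linarith
  rw [measure_sdiff hsub measurableSet_ball.nullMeasurableSet measure_ball_lt_top.ne,
    volume_closedBall_eq_unitBallVol _ (by linarith), volume_ball_eq_unitBallVol _ h1,
    ← ENNReal.ofReal_sub _ (mul_nonneg (unitBallVol_pos _).le (pow_nonneg h1 _)), mul_sub]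

end

/-- The odd part of the binomial expansion. -/
lemma one_add_pow_sub_one_sub_pow (m : ℕ) (r : ℝ) :
    (1 + r) ^ (m + 1) - (1 - r) ^ (m + 1) =
      ∑ i ∈ (range (m + 1)).filter (fun i => Even i),
        2 * ((m + 1).choose (i + 1) : ℝ) * r ^ (i + 1) := by
  rw [add_comm 1 r, show (1 : ℝ) - r = -r + 1 by ring, add_pow, add_pow, ← sum_sub_distrib,
    sum_range_succ', sum_filter]
  simp only [one_pow, mul_one, pow_zero, sub_self, add_zero]
  refine sum_congr rfl fun i _ => ?_
  split_ifs with h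
  · rw [h.add_one.neg_pow]; ring
  · rw [(Nat.not_even_iff_odd.mp h).add_one.neg_pow]; ring

section

variable {U V : Type*}
  [NormedAddCommGroup U] [InnerProductSpace ℝ U] [FiniteDimensional ℝ U]
  [MeasurableSpace U] [BorelSpace U]
  [NormedAddCommGroup V] [InnerProductSpace ℝ V] [FiniteDimensional ℝ V]
  [MeasurableSpace V] [BorelSpace V]

/-- Cavalieri's principle in an orthogonal sum. -/
lemma volume_withLp_prod_eq_lintegral {S : Set (WithLp 2 (U × V))} (hS : MeasurableSet S) :
    volume S = ∫⁻ v : V, volume {u : U | WithLp.toLp 2 (u, v) ∈ S} := by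
  rw [← (WithLp.volume_preserving_toLp U V).measure_preimage hS.nullMeasurableSet,
    Measure.volume_eq_prod,
    Measure.prod_apply_symm ((WithLp.volume_preserving_toLp U V).measurable hS)]
  rfl

/-- Slicing a ball of radius `ε` in an orthogonal sum evaluates the moments of the slice radius. -/
lemma lintegral_sqrt_pow_finrank [Nontrivial U] {ε : ℝ} (hε : 0 < ε) :
    ∫⁻ v : V, ENNReal.ofReal (√(ε ^ 2 - ‖v‖ ^ 2) ^ Module.finrank ℝ U) =
      ENNReal.ofReal (unitBallVol (Module.finrank ℝ V + Module.finrank ℝ U) /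
        unitBallVol (Module.finrank ℝ U) *
          ε ^ (Module.finrank ℝ V + Module.finrank ℝ U)) := by
  have : Nontrivial (WithLp 2 (U × V)) := (WithLp.equiv 2 (U × V)).nontrivial
  have hrank : Module.finrank ℝ (WithLp 2 (U × V)) =
      Module.finrank ℝ V + Module.finrank ℝ U := by
    rw [(WithLp.linearEquiv 2 ℝ (U × V)).finrank_eq, Module.finrank_prod, add_comm]
  have hball := volume_closedBall_eq_unitBallVol (0 : WithLp 2 (U × V)) hε.le
  have hω := unitBallVol_pos (Module.finrank ℝ U)
  have hslice (v : V) : volume {u : U | WithLp.toLp 2 (u, v) ∈ closedBall 0 ε} =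
      ENNReal.ofReal (unitBallVol (Module.finrank ℝ U)) *
        ENNReal.ofReal (√(ε ^ 2 - ‖v‖ ^ 2) ^ Module.finrank ℝ U) := by
    have hmem (u : U) : WithLp.toLp 2 (u, v) ∈ closedBall (0 : WithLp 2 (U × V)) ε ↔
        ‖u‖ ^ 2 ≤ ε ^ 2 - ‖v‖ ^ 2 := by
      rw [mem_closedBall_zero_iff, ← sq_le_sq₀ (norm_nonneg _) hε.le,
        WithLp.prod_norm_sq_eq_of_L2, le_sub_iff_add_le,
        WithLp.toLp_fst, WithLp.toLp_snd]
    simp only [hmem]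
    rcases le_or_gt 0 (ε ^ 2 - ‖v‖ ^ 2) with h | h
    · rw [← ENNReal.ofReal_mul hω.le,
        ← volume_closedBall_eq_unitBallVol (0 : U) (Real.sqrt_nonneg _)]
      congr 1
      ext u
      rw [mem_closedBall_zero_iff, Real.le_sqrt (norm_nonneg _) h, Set.mem_ofPred_eq]
    · rw [Real.sqrt_eq_zero_of_nonpos h.le, zero_pow Module.finrank_pos.ne', ENNReal.ofReal_zero,
        mul_zero]
      convert measure_empty (μ := (volume : Measure U))
      exact Set.eq_empty_of_forall_notMem fun u hu => (h.trans_le (sq_nonneg ‖u‖)).not_ge hu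
  rw [volume_withLp_prod_eq_lintegral measurableSet_closedBall, hrank] at hball
  simp only [hslice] at hball
  rw [lintegral_const_mul' _ _ ENNReal.ofReal_ne_top] at hball
  rw [div_mul_eq_mul_div, ENNReal.ofReal_div_of_pos hω, ← hball, mul_comm,
    ENNReal.mul_div_cancel_right (ENNReal.ofReal_pos.mpr hω).ne' ENNReal.ofReal_ne_top]

/-- The volume of the tube around the unit sphere of `U` in the orthogonal sum of `U` and `V`,
as an integral over the `V`-component. -/
lemma volume_tube_withLp_prod [Nontrivial U] {ε : ℝ} (hε0 : 0 < ε) (hε1 : ε < 1) :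
    volume {x : WithLp 2 (U × V) | (‖x.fst‖ - 1) ^ 2 + ‖x.snd‖ ^ 2 ≤ ε ^ 2} =
      ∫⁻ v : V, ENNReal.ofReal (unitBallVol (Module.finrank ℝ U) *
        ((1 + √(ε ^ 2 - ‖v‖ ^ 2)) ^ Module.finrank ℝ U -
          (1 - √(ε ^ 2 - ‖v‖ ^ 2)) ^ Module.finrank ℝ U)) := by
  rw [volume_withLp_prod_eq_lintegral]
  swap
  · refine (isClosed_le ?_ continuous_const).measurableSet
    fun_prop
  refine lintegral_congr fun v => ?_
  simp only [Set.mem_ofPred_eq, ← le_sub_iff_add_le, WithLp.toLp_fst, WithLp.toLp_snd]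
  rcases le_or_gt 0 (ε ^ 2 - ‖v‖ ^ 2) with h | h
  · have hr : √(ε ^ 2 - ‖v‖ ^ 2) ≤ 1 := by
      refine Real.sqrt_le_one.mpr ?_
      nlinarith [sq_nonneg ‖v‖]
    rw [← volume_shell (Real.sqrt_nonneg _) hr]
    congr 1
    ext u
    rw [Set.mem_ofPred_eq, ← Real.sqrt_le_sqrt_iff h, Real.sqrt_sq_eq_abs, abs_le, Set.mem_sdiff,
      mem_closedBall_zero_iff, mem_ball_zero_iff, not_lt]
    constructor <;> rintro ⟨h1, h2⟩ <;> constructor <;> linarith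
  · rw [Real.sqrt_eq_zero_of_nonpos h.le]
    have hempty : {u : U | (‖u‖ - 1) ^ 2 ≤ ε ^ 2 - ‖v‖ ^ 2} = ∅ :=
      Set.eq_empty_of_forall_notMem fun u hu => by
        have : (‖u‖ - 1) ^ 2 ≤ ε ^ 2 - ‖v‖ ^ 2 := hu
        nlinarith [sq_nonneg (‖u‖ - 1)]
    simp [hempty]

end

/-- Membership in the tube around the unit sphere of `U` inside the orthogonal sum. -/
lemma infDist_sphere_withLp_prod_le_iff {U V : Type*}
    [NormedAddCommGroup U] [InnerProductSpace ℝ U] [FiniteDimensional ℝ U] [Nontrivial U]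
    [NormedAddCommGroup V] [InnerProductSpace ℝ V] [FiniteDimensional ℝ V]
    {ε : ℝ} (hε0 : 0 < ε) (hε1 : ε < 1)
    (x : WithLp 2 (U × V)) :
    infDist x {y : WithLp 2 (U × V) | y.snd = 0 ∧ ‖y‖ = 1} ≤ ε ↔
      (‖x.fst‖ - 1) ^ 2 + ‖x.snd‖ ^ 2 ≤ ε ^ 2 := by
  have hnorm {y : WithLp 2 (U × V)} (hy : y.snd = 0) : ‖y‖ = ‖y.fst‖ := by
    rw [← sq_eq_sq₀ (norm_nonneg _) (norm_nonneg _), WithLp.prod_norm_sq_eq_of_L2, hy]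
    simp
  have hdist {y : WithLp 2 (U × V)} (hy : y.snd = 0) :
      dist x y ^ 2 = ‖x.fst - y.fst‖ ^ 2 + ‖x.snd‖ ^ 2 := by
    rw [dist_eq_norm, WithLp.prod_norm_sq_eq_of_L2]
    simp [hy]
  constructor
  · intro h
    have hcompact : IsCompact {y : WithLp 2 (U × V) | y.snd = 0 ∧ ‖y‖ = 1} := by
      refine (isCompact_sphere (0 : WithLp 2 (U × V)) 1).of_isClosed_subset
        (IsClosed.inter (isClosed_eq ?_ continuous_const) (isClosed_eq ?_ continuous_const)) ?_
      · fun_prop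
      · fun_prop
      · exact fun y hy => mem_sphere_zero_iff_norm.mpr hy.2
    have hne : {y : WithLp 2 (U × V) | y.snd = 0 ∧ ‖y‖ = 1}.Nonempty := by
      obtain ⟨u, hu⟩ := exists_norm_eq U zero_le_one
      refine ⟨WithLp.toLp 2 (u, 0), rfl, ?_⟩
      rw [hnorm rfl]
      exact hu
    obtain ⟨y, ⟨hy0, hy1⟩, hy⟩ := hcompact.exists_infDist_eq_dist hne x
    rw [hy] at h
    rw [hnorm hy0] at hy1
    have habs := abs_norm_sub_norm_le x.fst y.fst
    rw [hy1] at habs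
    calc (‖x.fst‖ - 1) ^ 2 + ‖x.snd‖ ^ 2
        ≤ ‖x.fst - y.fst‖ ^ 2 + ‖x.snd‖ ^ 2 := by
          gcongr ?_ + _
          exact sq_le_sq' (by linarith [neg_abs_le (‖x.fst‖ - 1)]) ((le_abs_self _).trans habs)
      _ = dist x y ^ 2 := (hdist hy0).symm
      _ ≤ ε ^ 2 := by gcongr
  · intro h
    have hu : ‖x.fst‖ ≠ 0 := fun h0 => by
      rw [h0] at h
      nlinarith [sq_nonneg ‖x.snd‖]
    set y : WithLp 2 (U × V) := WithLp.toLp 2 (‖x.fst‖⁻¹ • x.fst, 0)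
    have hy0 : y.snd = 0 := rfl
    have hy1 : ‖y‖ = 1 := by
      rw [hnorm hy0]
      change ‖‖x.fst‖⁻¹ • x.fst‖ = 1
      rw [norm_smul, norm_inv, norm_norm, inv_mul_cancel₀ hu]
    have hfst : ‖x.fst - y.fst‖ = |‖x.fst‖ - 1| := by
      change ‖x.fst - ‖x.fst‖⁻¹ • x.fst‖ = _
      rw [show x.fst - ‖x.fst‖⁻¹ • x.fst = (1 - ‖x.fst‖⁻¹) • x.fst by rw [sub_smul, one_smul],
        norm_smul, Real.norm_eq_abs, ← abs_of_nonneg (norm_nonneg x.fst), ← abs_mul, abs_norm,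
        sub_mul, inv_mul_cancel₀ hu, one_mul]
    refine (infDist_le_dist_of_mem (Set.mem_ofPred.mpr ⟨hy0, hy1⟩)).trans ?_
    rwa [← sq_le_sq₀ dist_nonneg hε0.le, hdist hy0, hfst, sq_abs]

/-- Splitting off the first `a` coordinates of `ℝ^(a + b)`, as an isometry. -/
noncomputable def euclideanSplit (a b : ℕ) :
    EuclideanSpace ℝ (Fin (a + b)) ≃ₗᵢ[ℝ]
      WithLp 2 (EuclideanSpace ℝ (Fin a) × EuclideanSpace ℝ (Fin b)) :=
  (LinearIsometryEquiv.piLpCongrLeft 2 ℝ ℝ finSumFinEquiv.symm).trans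
    (PiLp.sumPiLpEquivProdLpPiLp 2 _)

lemma euclideanSplit_snd_apply (a b : ℕ) (x : EuclideanSpace ℝ (Fin (a + b))) (j : Fin b) :
    (euclideanSplit a b x).snd j = x (Fin.natAdd a j) := rfl

lemma euclideanSplit_snd_eq_zero_iff (a b : ℕ) (x : EuclideanSpace ℝ (Fin (a + b))) :
    (euclideanSplit a b x).snd = 0 ↔ ∀ j : Fin (a + b), a ≤ (j : ℕ) → x j = 0 := by
  constructor
  · intro h j hj
    have := euclideanSplit_snd_apply a b x (Fin.subNat a (j.cast (add_comm a b)) hj)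
    rw [h] at this
    simpa using this.symm
  · intro h
    ext j
    rw [euclideanSplit_snd_apply]
    exact h _ (Fin.le_coe_natAdd a j)

/-- The volume of the `ε`-neighborhood in `ℝⁿ` of the unit `m`-sphere
`S^m = {x : x_{m+2} = ⋯ = x_n = 0, ‖x‖ = 1}` equals
`2 ω_{m+1} ε^s ∑_{i even, 0 ≤ i ≤ m} (ω_{s+i}/ω_{i+1}) C(m+1, i+1) ε^i`,
where `s = n - m`, for `0 < ε < 1`. -/
theorem tube_volume_embedded_sphere
    (n m : ℕ) (hmn : m < n) (ε : ℝ) (hε0 : 0 < ε) (hε1 : ε < 1) :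
    volume {x : EuclideanSpace ℝ (Fin n) |
        infDist x {y : EuclideanSpace ℝ (Fin n) |
          (∀ j : Fin n, m + 1 ≤ (j : ℕ) → y j = 0) ∧ ‖y‖ = 1} ≤ ε} =
      ENNReal.ofReal (2 * unitBallVol (m + 1) * ε ^ (n - m) *
        ∑ i ∈ (range (m + 1)).filter (fun i => Even i),
          (unitBallVol (n - m + i) / unitBallVol (i + 1)) *
            ((m + 1).choose (i + 1) : ℝ) * ε ^ i) := by
  obtain ⟨d, rfl⟩ := Nat.exists_eq_add_of_le (Nat.succ_le_of_lt hmn)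
  let φ := euclideanSplit (m + 1) d
  have hset : {x : EuclideanSpace ℝ (Fin (m + 1 + d)) |
        infDist x {y : EuclideanSpace ℝ (Fin (m + 1 + d)) |
          (∀ j : Fin (m + 1 + d), m + 1 ≤ (j : ℕ) → y j = 0) ∧ ‖y‖ = 1} ≤ ε} =
      φ ⁻¹' {x | (‖x.fst‖ - 1) ^ 2 + ‖x.snd‖ ^ 2 ≤ ε ^ 2} := by
    ext x
    rw [Set.mem_preimage, Set.mem_ofPred_eq, Set.mem_ofPred_eq,
      ← infDist_sphere_withLp_prod_le_iff hε0 hε1, ← infDist_image φ.isometry]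
    have himage : φ '' {y : EuclideanSpace ℝ (Fin (m + 1 + d)) |
          (∀ j : Fin (m + 1 + d), m + 1 ≤ (j : ℕ) → y j = 0) ∧ ‖y‖ = 1} =
        {y | y.snd = 0 ∧ ‖y‖ = 1} := by
      simp only [← euclideanSplit_snd_eq_zero_iff]
      ext z
      obtain ⟨y, rfl⟩ := φ.surjective z
      rw [φ.injective.mem_set_image]
      simp [φ]
    rw [himage]
  have hmeas : MeasurableSet {x : WithLp 2 (EuclideanSpace ℝ (Fin (m + 1)) ×
      EuclideanSpace ℝ (Fin d)) | (‖x.fst‖ - 1) ^ 2 + ‖x.snd‖ ^ 2 ≤ ε ^ 2} :=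
    (isClosed_le (by fun_prop) continuous_const).measurableSet
  rw [hset, φ.measurePreserving.measure_preimage hmeas.nullMeasurableSet,
    volume_tube_withLp_prod hε0 hε1]
  have hω := (unitBallVol_pos (m + 1)).le
  simp only [finrank_euclideanSpace_fin, one_add_pow_sub_one_sub_pow, mul_sum]
  have hd : m + 1 + d - m = d + 1 := by omega
  have hω2 (i : ℕ) : 0 ≤ unitBallVol (d + 1 + i) / unitBallVol (i + 1) :=
    div_nonneg (unitBallVol_pos _).le (unitBallVol_pos _).le
  simp only [hd]
  rw [ENNReal.ofReal_sum_of_nonneg fun i _ => by have := hω2 i; positivity]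
  have hintegrand (v : EuclideanSpace ℝ (Fin d)) := ENNReal.ofReal_sum_of_nonneg
    (s := (range (m + 1)).filter (fun i => Even i))
    (f := fun i => unitBallVol (m + 1) *
      (2 * ((m + 1).choose (i + 1) : ℝ) * √(ε ^ 2 - ‖v‖ ^ 2) ^ (i + 1)))
    (fun i _ => by positivity)
  rw [lintegral_congr hintegrand, lintegral_finsetSum _ (fun i _ => by fun_prop)]
  refine sum_congr rfl fun i _ => ?_
  have hmoment := lintegral_sqrt_pow_finrank (U := EuclideanSpace ℝ (Fin (i + 1)))
    (V := EuclideanSpace ℝ (Fin d)) hε0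
  simp only [finrank_euclideanSpace_fin] at hmoment
  simp_rw [← mul_assoc, ENNReal.ofReal_mul (show 0 ≤ unitBallVol (m + 1) * 2 *
    ((m + 1).choose (i + 1) : ℝ) by positivity)]
  rw [lintegral_const_mul' _ _ ENNReal.ofReal_ne_top, hmoment,
    ← ENNReal.ofReal_mul (by positivity), show d + (i + 1) = d + 1 + i by ring, pow_add ε (d + 1)]
  congr 1
  ring
end

section
/- Let C = {(x, y, 0) ∈ ℝ³ : x² + y² = 1} be the unit circle in the xy-plane of ℝ³. Then for every ε with 0 ≤ ε ≤ 1, the Lebesgue volume of the solid torus {p ∈ ℝ³ : infDist(p, C) ≤ ε} equals 2π²ε². -/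
open MeasureTheory Metric

/-- The distance from `(x, y, z)` to the unit circle of the horizontal plane is
`√((√(x² + y²) - 1)² + z²)`. -/
theorem infDist_unitCircle (p : EuclideanSpace ℝ (Fin 3)) :
    infDist p {q : EuclideanSpace ℝ (Fin 3) | q 0 ^ 2 + q 1 ^ 2 = 1 ∧ q 2 = 0} =
      √((√(p 0 ^ 2 + p 1 ^ 2) - 1) ^ 2 + p 2 ^ 2) := by
  set r := √(p 0 ^ 2 + p 1 ^ 2) with hr
  have hr0 : 0 ≤ r := Real.sqrt_nonneg _
  have hr2 : r ^ 2 = p 0 ^ 2 + p 1 ^ 2 := Real.sq_sqrt (by positivity)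
  obtain ⟨a, b, hab, ha, hb⟩ : ∃ a b : ℝ, a ^ 2 + b ^ 2 = 1 ∧ p 0 = r * a ∧ p 1 = r * b := by
    rcases hr0.eq_or_lt with h | h
    · refine ⟨1, 0, by norm_num, ?_, ?_⟩ <;> nlinarith
    · refine ⟨p 0 / r, p 1 / r, ?_, by field_simp, by field_simp⟩
      field_simp
      exact hr2.symm
  have hmem : (!₂[a, b, 0] : EuclideanSpace ℝ (Fin 3)) ∈
      {q : EuclideanSpace ℝ (Fin 3) | q 0 ^ 2 + q 1 ^ 2 = 1 ∧ q 2 = 0} := by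
    simpa using hab
  apply le_antisymm
  · refine (infDist_le_dist_of_mem hmem).trans_eq ?_
    rw [EuclideanSpace.dist_eq]
    congr 1
    simp only [Fin.sum_univ_three, Real.dist_eq, sq_abs]
    simp only [Matrix.cons_val]
    rw [ha, hb]
    linear_combination (r - 1) ^ 2 * hab
  · refine (le_infDist ⟨_, hmem⟩).2 fun q hq ↦ ?_
    obtain ⟨hq1, hq2⟩ := hq
    rw [EuclideanSpace.dist_eq]
    apply Real.sqrt_le_sqrt
    simp only [Fin.sum_univ_three, Real.dist_eq, sq_abs]
    have hcs : a * q 0 + b * q 1 ≤ 1 := by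
      nlinarith [sq_nonneg (a - q 0), sq_nonneg (b - q 1)]
    rw [ha, hb, hq2]
    nlinarith [mul_le_mul_of_nonneg_left hcs hr0]

/-- The area of an annulus of half-width `w ≤ 1` around the unit circle. -/
theorem volume_annulus {w : ℝ} (hw0 : 0 ≤ w) (hw1 : w ≤ 1) :
    volume {c : ℂ | (‖c‖ - 1) ^ 2 ≤ w ^ 2} = ENNReal.ofReal (4 * Real.pi * w) := by
  have hset : {c : ℂ | (‖c‖ - 1) ^ 2 ≤ w ^ 2} = closedBall 0 (1 + w) \ ball 0 (1 - w) := by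
    ext c
    simp only [Set.mem_ofPred_eq, Set.mem_sdiff, mem_closedBall_zero_iff, mem_ball_zero_iff,
      not_lt, sq_le_sq, abs_of_nonneg hw0, abs_le]
    constructor <;> rintro ⟨h, h'⟩ <;> constructor <;> linarith
  have hsub : ball (0 : ℂ) (1 - w) ⊆ closedBall 0 (1 + w) :=
    ball_subset_closedBall.trans (closedBall_subset_closedBall (by linarith))
  rw [hset, measure_sdiff hsub measurableSet_ball.nullMeasurableSet measure_ball_lt_top.ne,
    Complex.volume_closedBall, Complex.volume_ball, ← ENNReal.ofReal_coe_nnreal,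
    ← ENNReal.ofReal_pow (by linarith), ← ENNReal.ofReal_pow (by linarith),
    ← ENNReal.ofReal_mul (by positivity), ← ENNReal.ofReal_mul (by positivity),
    ← ENNReal.ofReal_sub _ (by positivity), NNReal.coe_real_pi]
  congr 1
  ring

/-- The area of the upper half-disc of radius `ε`. -/
theorem integral_sqrt_sq_sub_sq {ε : ℝ} (hε : 0 ≤ ε) :
    ∫ z in -ε..ε, √(ε ^ 2 - z ^ 2) = Real.pi * ε ^ 2 / 2 := by
  have h := intervalIntegral.smul_integral_comp_mul_right (a := -1) (b := 1)
    (fun z ↦ √(ε ^ 2 - z ^ 2)) ε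
  have hscale (z : ℝ) : √(ε ^ 2 - (z * ε) ^ 2) = ε * √(1 - z ^ 2) := by
    rw [show ε ^ 2 - (z * ε) ^ 2 = ε ^ 2 * (1 - z ^ 2) by ring, Real.sqrt_mul (sq_nonneg ε),
      Real.sqrt_sq hε]
  simp only [hscale, intervalIntegral.integral_const_mul, integral_sqrt_one_sub_sq, smul_eq_mul,
    neg_mul, one_mul] at h
  rw [← h]
  ring

/-- Volume of the solid torus in `ℝ × ℂ`, computed by horizontal slices. -/
theorem volume_solidTorus {ε : ℝ} (hε0 : 0 ≤ ε) (hε1 : ε ≤ 1) :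
    volume {x : ℝ × ℂ | (‖x.2‖ - 1) ^ 2 + x.1 ^ 2 ≤ ε ^ 2} =
      ENNReal.ofReal (2 * Real.pi ^ 2 * ε ^ 2) := by
  have hmeas : MeasurableSet {x : ℝ × ℂ | (‖x.2‖ - 1) ^ 2 + x.1 ^ 2 ≤ ε ^ 2} :=
    (isClosed_le (by fun_prop) (by fun_prop)).measurableSet
  have hslice (z : ℝ) : volume (Prod.mk z ⁻¹' {x : ℝ × ℂ | (‖x.2‖ - 1) ^ 2 + x.1 ^ 2 ≤ ε ^ 2}) =
      (Set.Icc (-ε) ε).indicator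
        (fun z ↦ ENNReal.ofReal (4 * Real.pi * √(ε ^ 2 - z ^ 2))) z := by
    by_cases hz : z ∈ Set.Icc (-ε) ε
    · have hz2 : z ^ 2 ≤ ε ^ 2 := sq_le_sq' hz.1 hz.2
      have hw1 : √(ε ^ 2 - z ^ 2) ≤ 1 := Real.sqrt_le_one.2 (by nlinarith)
      rw [Set.indicator_of_mem hz, ← volume_annulus (Real.sqrt_nonneg _) hw1,
        Real.sq_sqrt (sub_nonneg.2 hz2)]
      simp only [Set.preimage_ofPred_eq, le_sub_iff_add_le]
    · rw [Set.indicator_of_notMem hz]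
      convert measure_empty (μ := (volume : Measure ℂ))
      refine Set.eq_empty_of_forall_notMem fun c hc ↦ hz (abs_le.1 (abs_le_of_sq_le_sq ?_ hε0))
      simp only [Set.mem_preimage, Set.mem_ofPred_eq] at hc
      linarith [sq_nonneg (‖c‖ - 1)]
  have hint : IntegrableOn (fun z ↦ 4 * Real.pi * √(ε ^ 2 - z ^ 2)) (Set.Icc (-ε) ε) :=
    Continuous.integrableOn_Icc (by fun_prop)
  rw [Measure.volume_eq_prod, Measure.prod_apply hmeas]
  simp only [hslice]
  rw [lintegral_indicator measurableSet_Icc,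
    ← ofReal_integral_eq_lintegral_ofReal hint (ae_of_all _ fun z ↦ by positivity),
    integral_Icc_eq_integral_Ioc, ← intervalIntegral.integral_of_le (by linarith),
    intervalIntegral.integral_const_mul, integral_sqrt_sq_sub_sq hε0]
  congr 1
  ring

/-- The volume of the solid torus of radius `0 ≤ ε ≤ 1` around the unit circle
`C = {(x, y, 0) : x² + y² = 1}` in `ℝ³` equals `2π²ε²`. -/
theorem tube_volume_circle
    (ε : ℝ) (hε0 : 0 ≤ ε) (hε1 : ε ≤ 1) :
    volume {p : EuclideanSpace ℝ (Fin 3) |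
        infDist p {q : EuclideanSpace ℝ (Fin 3) | q 0 ^ 2 + q 1 ^ 2 = 1 ∧ q 2 = 0} ≤ ε} =
      ENNReal.ofReal (2 * Real.pi ^ 2 * ε ^ 2) := by
  have hmp := (((MeasurePreserving.id (volume : Measure ℝ)).prod
    (Complex.volume_preserving_equiv_pi.symm)).comp
    (volume_preserving_piFinSuccAbove (fun _ : Fin 3 ↦ ℝ) 2)).comp
    (PiLp.volume_preserving_ofLp (Fin 3))
  have hmeas : MeasurableSet {x : ℝ × ℂ | (‖x.2‖ - 1) ^ 2 + x.1 ^ 2 ≤ ε ^ 2} :=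
    (isClosed_le (by fun_prop) (by fun_prop)).measurableSet
  rw [← volume_solidTorus hε0 hε1, Measure.volume_eq_prod ℝ ℂ,
    ← hmp.measure_preimage hmeas.nullMeasurableSet]
  congr 1
  ext p
  have hnorm : ‖Complex.measurableEquivPi.symm (fun i ↦ p ((2 : Fin 3).succAbove i))‖ =
      √(p 0 ^ 2 + p 1 ^ 2) := by
    rw [Complex.measurableEquivPi_symm_apply, Complex.norm_add_mul_I]
    rfl
  change _ ↔ (‖Complex.measurableEquivPi.symm (fun i ↦ p ((2 : Fin 3).succAbove i))‖ - 1) ^ 2 +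
    p 2 ^ 2 ≤ ε ^ 2
  rw [hnorm, Set.mem_ofPred_eq, infDist_unitCircle, Real.sqrt_le_left hε0]
end

section
/- Let n ≥ 1 and 1 ≤ s ≤ n, and let f_1,…,f_s : ℝ^n → ℝ be smooth functions whose common zero set V = {x ∈ ℝ^n : f_1(x) = ⋯ = f_s(x) = 0} is compact and nonempty, and such that at every p ∈ V the gradients ∇f_1(p),…,∇f_s(p) are linearly independent. Then for every unit vector w ∈ S^{n−1} there exists a point p ∈ V such that w ∈ span{∇f_1(p), …, ∇f_s(p)} (i.e. the generalized Gauss map of V is surjective onto S^{n−1}). -/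
open MeasureTheory Metric

/-- For a compact nonempty submanifold `V ⊆ ℝⁿ` given as the common zero set of
smooth functions `f₁, …, f_s` with linearly independent gradients on `V`, the
generalized Gauss map is surjective: every unit vector `w` is normal to `V` at some
point `p ∈ V`, i.e. `w` lies in the span of the gradients at `p`. -/
theorem gauss_map_surjective
    (n s : ℕ) (hn : 1 ≤ n) (hs : 1 ≤ s) (hsn : s ≤ n)
    (f : Fin s → EuclideanSpace ℝ (Fin n) → ℝ)
    (hf : ∀ i, ContDiff ℝ (⊤ : ℕ∞) (f i))
    (V : Set (EuclideanSpace ℝ (Fin n)))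
    (hV : V = {x | ∀ i, f i x = 0})
    (hcompact : IsCompact V) (hne : V.Nonempty)
    (hci : ∀ p ∈ V, LinearIndependent ℝ (fun i : Fin s => gradient (f i) p)) :
    ∀ w : EuclideanSpace ℝ (Fin n), ‖w‖ = 1 →
      ∃ p ∈ V, w ∈ Submodule.span ℝ (Set.range fun i : Fin s => gradient (f i) p) := by
  intro w _
  obtain ⟨p, hp, hmax⟩ := hcompact.exists_isMaxOn hne (innerSL ℝ w).continuous.continuousOn
  refine ⟨p, hp, ?_⟩
  have hpV : ∀ i, f i p = 0 := by simpa [hV] using hp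
  have hextr : IsLocalExtrOn (innerSL ℝ w) {x | ∀ i, f i x = f i p} p := by
    have hset : {x | ∀ i, f i x = f i p} = V := by simp only [hV, hpV]
    rw [hset]
    exact Or.inr hmax.localize
  obtain ⟨Λ, Λ₀, hne0, hsum⟩ := hextr.exists_multipliers_of_hasStrictFDerivAt
    (fun i => (hf i).contDiffAt.hasStrictFDerivAt (by simp)) (innerSL ℝ w).hasStrictFDerivAt
  have hgrad : ∑ i, Λ i • gradient (f i) p + Λ₀ • w = 0 := by
    have h := congrArg (InnerProductSpace.toDual ℝ (EuclideanSpace ℝ (Fin n))).symm hsum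
    have hw : (InnerProductSpace.toDual ℝ (EuclideanSpace ℝ (Fin n))).symm (innerSL ℝ w) = w :=
      (InnerProductSpace.toDual ℝ (EuclideanSpace ℝ (Fin n))).symm_apply_apply w
    simpa [gradient, hw] using h
  have hΛ₀ : Λ₀ ≠ 0 := by
    rintro rfl
    have hΛ := Fintype.linearIndependent_iff.1 (hci p hp) Λ (by simpa using hgrad)
    exact hne0 (Prod.ext (funext hΛ) rfl)
  rw [← Submodule.smul_mem_iff _ hΛ₀, eq_neg_of_add_eq_zero_right hgrad]
  exact Submodule.neg_mem _ (Submodule.sum_mem _ fun i _ =>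
    Submodule.smul_mem _ _ (Submodule.subset_span ⟨i, rfl⟩))
end
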